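/- arXiv:2008.06554 — 2 statements merged into one kernel-verified Lean document; each statement's English description precedes it below -/
import Mathlib

section
/- There is an absolute constant K such that the following holds in the Line setting. For every deterministic MPC algorithm with m machines, local memory s bits, and at most q oracle queries per machine per round, and every integer k ≥ 0, the probability over uniformly random (RO, X) of the event E^{(k)} is at most K·w·v^p·(k+1)·m·q·2^(−u). (The paper, Lemma 3.3, states this bound with K = 1, i.e., Pr[E^{(k)}] ≤ w·v^{p}·(k+1)·m·q·2^(−u).) -/
/-- Probability of `P` under the uniform distribution on a finite type `Ω`. -/
noncomputable def unifProb {Ω : Type} [Fintype Ω] (P : Ω → Prop) : ℝ :=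
  (Set.ncard {ω : Ω | P ω} : ℝ) / (Fintype.card Ω : ℝ)
/-- Bit strings of length `k`. -/
abbrev Bits (k : ℕ) := Fin k → Bool

/-- The `j`-th bit (`0`-based) of a bit string, `false` out of range. -/
def bitAt {k : ℕ} (y : Bits k) (j : ℕ) : Bool := if h : j < k then y ⟨j, h⟩ else false

/-- The `i`-th block (`0`-based) of the input `X = (x_1, …, x_v)`. -/
def getX {u v : ℕ} (X : Fin v → Bits u) (i : ℕ) : Bits u :=
  if h : i < v then X ⟨i, h⟩ else fun _ => false
/-- The integer encoded by the first `κ` bits of a bit string. -/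
def natOf {n : ℕ} (y : Bits n) (κ : ℕ) : ℕ :=
  ∑ j ∈ Finset.range κ, if bitAt y j then 2 ^ j else 0

/-- `⟨i, x, ρ⟩` : the `n`-bit concatenation of the `W`-bit binary encoding of `i`, the
`u`-bit strings `x` and `ρ`, and trailing zeros. -/
def lineStr (n W u : ℕ) (i : ℕ) (x ρ : Bits u) : Bits n := fun j =>
  if (j : ℕ) < W then Nat.testBit i (j : ℕ)
  else if (j : ℕ) < W + u then bitAt x ((j : ℕ) - W)
  else if (j : ℕ) < W + 2 * u then bitAt ρ ((j : ℕ) - W - u)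
  else false

/-- `lineChain n u v W κ RO X k = (ℓ_{k+1} − 1, r_{k+1})` : the Line chain, with the
pointer stored `0`-based.  `ℓ_1 = 1, r_1 = 0^u`; `e_i = ⟨i, x_{ℓ_i}, r_i⟩`;
`ℓ_{i+1} − 1` is the integer encoded by the first `κ` bits of `RO(e_i)` (reduced mod
`v`, which is the identity when `v = 2^κ`), and `r_{i+1}` is the `u` bits of `RO(e_i)`
in positions `κ+1, …, κ+u`. -/
def lineChain (n u v W κ : ℕ) (RO : Bits n → Bits n) (X : Fin v → Bits u) :
    ℕ → ℕ × Bits u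
  | 0 => (0, fun _ => false)
  | k + 1 =>
    let c := lineChain n u v W κ RO X k
    let e := lineStr n W u (k + 1) (getX X (c.1 % v)) c.2
    (natOf (RO e) κ % v, fun j => bitAt (RO e) (κ + (j : ℕ)))

/-- `lineE n u v W κ RO X k` is the paper's `e_{k+1}`. -/
def lineE (n u v W κ : ℕ) (RO : Bits n → Bits n) (X : Fin v → Bits u) (k : ℕ) : Bits n :=
  lineStr n W u (k + 1) (getX X ((lineChain n u v W κ RO X k).1 % v))
    (lineChain n u v W κ RO X k).2

/-- `branchE n u v W κ RO X j a c` is the branch entry `e'_c` determined by the paper's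
(1-based) index `j` and the (0-based) sequence `a` (only `a 1, …, a c` matter):
`e'_0 = ⟨j+1, x_{ℓ_{j+1}}, r_{j+1}⟩ = e_{j+1}`, and for `c ≥ 1`,
`e'_c = ⟨j+c+1, x_{a_c}, ρ_c⟩` where `ρ_c` is the `u` bits of `RO(e'_{c−1})` in
positions `κ+1, …, κ+u`. -/
def branchE (n u v W κ : ℕ) (RO : Bits n → Bits n) (X : Fin v → Bits u) (j : ℕ)
    (a : ℕ → Fin v) : ℕ → Bits n
  | 0 => lineE n u v W κ RO X j
  | c + 1 => lineStr n W u (j + c + 2) (X (a (c + 1)))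
      (fun t => bitAt (RO (branchE n u v W κ RO X j a c)) (κ + (t : ℕ)))
/-- Answers to the first `t` queries of a deterministic adaptive oracle algorithm whose
next-query function is `f`. -/
def advAns (n : ℕ) (RO : Bits n → Bits n) (f : List (Bits n) → Bits n) : ℕ → List (Bits n)
  | 0 => []
  | t + 1 => advAns n RO f t ++ [RO (f (advAns n RO f t))]

/-- The `(t+1)`-st query (so the paper's `q_{t+1}`) of the adaptive algorithm `f`. -/
def advQ (n : ℕ) (RO : Bits n → Bits n) (f : List (Bits n) → Bits n) (t : ℕ) : Bits n :=
  f (advAns n RO f t)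
/-- A deterministic MPC algorithm with `m` machines, local memory `s` bits, at most `q`
adaptive oracle queries (to an oracle on `n`-bit strings) per machine per round, on
inputs from `I`.  `init` splits the input into the machines' initial states, `qf k i` is
machine `i`'s next-query function in round `k` (from its state and the answers received
so far in the round), and `cf k i` produces the messages machine `i` sends to each
machine at the end of round `k`; each machine receives at most `s` bits per round. -/
structure MPC (n s q m : ℕ) (I : Type) where
  init : I → Fin m → Bits s
  qf : ℕ → Fin m → Bits s → List (Bits n) → Bits n
  cf : ℕ → Fin m → Bits s → List (Bits n) → Fin m → List Bool
  comm_le : ∀ (k : ℕ) (st : Fin m → Bits s) (ans : Fin m → List (Bits n)) (j : Fin m),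
    (∑ i : Fin m, (cf k i (st i) (ans i) j).length) ≤ s

/-- Pad/truncate a list of booleans to an `s`-bit state. -/
def listToBits (s : ℕ) (L : List Bool) : Bits s := fun b => L.getD (b : ℕ) false

/-- `mstate A RO X k i` : the state of machine `i` at the beginning of round `k` when the
MPC algorithm `A` is run with oracle `RO` on input `X`. -/
def mstate {n s q m : ℕ} {I : Type} (A : MPC n s q m I) (RO : Bits n → Bits n) (X : I) :
    ℕ → Fin m → Bits s
  | 0 => A.init X
  | k + 1 => fun j =>
      listToBits s ((List.ofFn (fun i : Fin m =>
        A.cf k i (mstate A RO X k i)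
          (advAns n RO (A.qf k i (mstate A RO X k i)) q) j)).flatten)

/-- The `(t+1)`-st oracle query of machine `i` in round `k` of the run of `A` with
oracle `RO` on input `X`. -/
def mquery {n s q m : ℕ} {I : Type} (A : MPC n s q m I) (RO : Bits n → Bits n) (X : I)
    (k : ℕ) (i : Fin m) (t : ℕ) : Bits n :=
  advQ n RO (A.qf k i (mstate A RO X k i)) t

theorem lineStr_index_inj {n W u i i' : ℕ} (hW : W ≤ n) (hi : i < 2 ^ W) (hi' : i' < 2 ^ W)
    {x ρ x' ρ' : Bits u} (h : lineStr n W u i x ρ = lineStr n W u i' x' ρ') : i = i' := by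
  apply Nat.eq_of_testBit_eq
  intro t
  by_cases ht : t < W
  · have := congrFun h ⟨t, by omega⟩
    simpa [lineStr, ht] using this
  · have h2 : 2 ^ W ≤ 2 ^ t := Nat.pow_le_pow_right (by norm_num) (by omega)
    rw [Nat.testBit_lt_two_pow (lt_of_lt_of_le hi h2),
      Nat.testBit_lt_two_pow (lt_of_lt_of_le hi' h2)]

theorem lineStr_rho {n W u i : ℕ} (hn : W + 2 * u ≤ n) (x ρ : Bits u) (t : Fin u) :
    bitAt (lineStr n W u i x ρ) (W + u + (t : ℕ)) = ρ t := by
  have ht := t.2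
  have h1 : W + u + (t : ℕ) < n := by omega
  have h2 : ¬ (W + u + (t : ℕ) < W) := by omega
  have h3 : ¬ (W + u + (t : ℕ) < W + u) := by omega
  have h4 : (W + u + (t : ℕ) < W + 2 * u) := by omega
  have h5 : W + u + (t : ℕ) - W - u = t := by omega
  simp only [bitAt, lineStr, h1, h2, h3, h4, h5, dif_pos, if_pos, if_neg, not_false_eq_true]
  simp

/-- The oracles agree on all entries with index `< N`. -/
def AgreeBelow (n W u N : ℕ) (RO RO' : Bits n → Bits n) : Prop :=
  ∀ i x ρ, i < N → RO' (lineStr n W u i x ρ) = RO (lineStr n W u i x ρ)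

theorem lineChain_agree {n u v W κ N : ℕ} {RO RO' : Bits n → Bits n} (X : Fin v → Bits u)
    (h : AgreeBelow n W u N RO RO') : ∀ k, k < N →
    lineChain n u v W κ RO' X k = lineChain n u v W κ RO X k := by
  intro k
  induction k with
  | zero => intro _; rfl
  | succ k ih =>
    intro hk
    simp only [lineChain]
    rw [ih (by omega), h _ _ _ hk]

theorem lineE_agree {n u v W κ N : ℕ} {RO RO' : Bits n → Bits n} (X : Fin v → Bits u)
    (h : AgreeBelow n W u N RO RO') (k : ℕ) (hk : k < N) :
    lineE n u v W κ RO' X k = lineE n u v W κ RO X k := by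
  simp only [lineE]
  rw [lineChain_agree X h k hk]

theorem branchE_form {n u v W κ : ℕ} (RO : Bits n → Bits n) (X : Fin v → Bits u) (j : ℕ)
    (a : ℕ → Fin v) (c : ℕ) :
    ∃ x ρ, branchE n u v W κ RO X j a c = lineStr n W u (j + c + 1) x ρ := by
  cases c with
  | zero => exact ⟨_, _, rfl⟩
  | succ c => exact ⟨_, _, rfl⟩

theorem branchE_agree {n u v W κ N : ℕ} {RO RO' : Bits n → Bits n} (X : Fin v → Bits u)
    (h : AgreeBelow n W u N RO RO') (j : ℕ) (a : ℕ → Fin v) : ∀ c, j + c < N →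
    branchE n u v W κ RO' X j a c = branchE n u v W κ RO X j a c := by
  intro c
  induction c with
  | zero => intro hc; exact lineE_agree X h j hc
  | succ c ih =>
    intro hc
    simp only [branchE]
    rw [ih (by omega)]
    obtain ⟨x, ρ, hf⟩ := branchE_form (W := W) (κ := κ) RO X j a c
    rw [hf, h _ _ _ (by omega)]

theorem branchE_congr {n u v W κ : ℕ} (RO : Bits n → Bits n) (X : Fin v → Bits u) (j : ℕ)
    (a a' : ℕ → Fin v) : ∀ c, (∀ d, 1 ≤ d → d ≤ c → a d = a' d) →
    branchE n u v W κ RO X j a c = branchE n u v W κ RO X j a' c := by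
  intro c
  induction c with
  | zero => intro _; rfl
  | succ c ih =>
    intro hc
    simp only [branchE]
    rw [ih (fun d h1 h2 => hc d h1 (by omega)), hc (c + 1) (by omega) le_rfl]

/-- The previous entry. -/
def prevEntry (n u v W κ : ℕ) (RO : Bits n → Bits n) (X : Fin v → Bits u) (j : ℕ)
    (a : ℕ → Fin v) (b : ℕ) : Bits n :=
  if b = 0 then lineE n u v W κ RO X (j - 1) else branchE n u v W κ RO X j a (b - 1)

theorem prevEntry_form {n u v W κ : ℕ} (RO : Bits n → Bits n) (X : Fin v → Bits u) (j : ℕ)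
    (hj : 1 ≤ j) (a : ℕ → Fin v) (b : ℕ) :
    ∃ x ρ, prevEntry n u v W κ RO X j a b = lineStr n W u (j + b) x ρ := by
  cases b with
  | zero =>
    obtain ⟨j, rfl⟩ : ∃ j', j = j' + 1 := ⟨j - 1, by omega⟩
    exact ⟨_, _, rfl⟩
  | succ b => simpa [prevEntry, add_assoc] using branchE_form (W := W) (κ := κ) RO X j a b

theorem prevEntry_agree {n u v W κ : ℕ} {RO RO' : Bits n → Bits n} (X : Fin v → Bits u)
    (j : ℕ) (hj : 1 ≤ j) (a : ℕ → Fin v) (b : ℕ)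
    (h : AgreeBelow n W u (j + b) RO RO') :
    prevEntry n u v W κ RO' X j a b = prevEntry n u v W κ RO X j a b := by
  cases b with
  | zero => simpa [prevEntry] using lineE_agree X h (j - 1) (by omega)
  | succ b => simpa [prevEntry] using branchE_agree X h j a b (by omega)

theorem branchE_rho {n u v W κ : ℕ} (hn : W + 2 * u ≤ n) (RO : Bits n → Bits n)
    (X : Fin v → Bits u) (j : ℕ) (hj : 1 ≤ j) (a : ℕ → Fin v) (b : ℕ) (t : Fin u) :
    bitAt (branchE n u v W κ RO X j a b) (W + u + (t : ℕ)) =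
      bitAt (RO (prevEntry n u v W κ RO X j a b)) (κ + (t : ℕ)) := by
  cases b with
  | zero =>
    obtain ⟨j, rfl⟩ : ∃ j', j = j' + 1 := ⟨j - 1, by omega⟩
    simp only [branchE]
    rw [lineE, lineStr_rho hn]
    rfl
  | succ b =>
    simp only [branchE]
    rw [lineStr_rho hn]
    rfl

theorem advAns_agree {n : ℕ} {RO RO' : Bits n → Bits n} (f : List (Bits n) → Bits n) :
    ∀ T, (∀ t < T, RO' (advQ n RO f t) = RO (advQ n RO f t)) →
      advAns n RO' f T = advAns n RO f T := by
  intro T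
  induction T with
  | zero => intro _; rfl
  | succ T ih =>
    intro h
    simp only [advAns]
    rw [ih (fun t ht => h t (by omega))]
    have := h T (by omega)
    simp only [advQ] at this
    rw [this]

theorem mstate_agree {n s q m : ℕ} {I : Type} (A : MPC n s q m I) {RO RO' : Bits n → Bits n}
    (X : I) : ∀ k, (∀ k1 < k, ∀ i, ∀ t < q,
      RO' (mquery A RO X k1 i t) = RO (mquery A RO X k1 i t)) →
      mstate A RO' X k = mstate A RO X k := by
  intro k
  induction k with
  | zero => intro _; rfl
  | succ k ih =>
    intro h
    funext j
    simp only [mstate]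
    rw [ih (fun k1 hk1 => h k1 (by omega))]
    congr 3
    funext i
    rw [advAns_agree _ q (fun t ht => h k (by omega) i t ht)]

theorem mquery_agree {n s q m : ℕ} {I : Type} (A : MPC n s q m I) {RO RO' : Bits n → Bits n}
    (X : I) (k : ℕ) (i : Fin m) (t : ℕ)
    (h1 : ∀ k1 < k, ∀ i, ∀ t < q, RO' (mquery A RO X k1 i t) = RO (mquery A RO X k1 i t))
    (h2 : ∀ t1 < t, RO' (mquery A RO X k i t1) = RO (mquery A RO X k i t1)) :
    mquery A RO' X k i t = mquery A RO X k i t := by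
  unfold mquery advQ
  rw [mstate_agree A X k h1, advAns_agree _ t h2]

/-- Replace the `u` bits of `y` at positions `κ, …, κ+u-1`. -/
def setB {n u : ℕ} (κ : ℕ) (y : Bits n) (z : Bits u) : Bits n := fun i =>
  if κ ≤ (i : ℕ) ∧ (i : ℕ) < κ + u then bitAt z ((i : ℕ) - κ) else y i

theorem bitAt_setB {n u κ : ℕ} (hn : κ + u ≤ n) (y : Bits n) (z : Bits u) (t : Fin u) :
    bitAt (setB κ y z) (κ + (t : ℕ)) = z t := by
  have ht := t.2
  have h1 : κ + (t : ℕ) < n := by omega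
  simp [bitAt, setB, h1]

theorem setB_setB {n u κ : ℕ} (y : Bits n) (z z' : Bits u)
    (h : ∀ t : Fin u, bitAt y (κ + (t : ℕ)) = z' t) :
    setB κ (setB κ y z) z' = y := by
  funext i
  by_cases hi : κ ≤ (i : ℕ) ∧ (i : ℕ) < κ + u
  · have h1 : (i : ℕ) - κ < u := by omega
    have h2 := h ⟨(i : ℕ) - κ, h1⟩
    have h3 : κ + ((i : ℕ) - κ) = i := by omega
    simp only [h3] at h2
    simp only [setB, if_pos hi]
    simp only [bitAt, dif_pos h1, ← h2]
    simp
  · simp only [setB, if_neg hi]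

theorem resample_card {n u κ : ℕ} {I : Type} [Fintype I] (hn : κ + u ≤ n)
    (S : Set ((Bits n → Bits n) × I))
    (P : (Bits n → Bits n) × I → Bits n) (g : (Bits n → Bits n) × I → Bits u)
    (hg : ∀ ω ∈ S, ∀ t : Fin u, bitAt (ω.1 (P ω)) (κ + (t : ℕ)) = g ω t)
    (hP : ∀ ω ∈ S, ∀ y, P (Function.update ω.1 (P ω) y, ω.2) = P ω)
    (hQ : ∀ ω ∈ S, ∀ y, g (Function.update ω.1 (P ω) y, ω.2) = g ω) :
    S.ncard * 2 ^ u ≤ Fintype.card ((Bits n → Bits n) × I) := by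
  classical
  let F : S × Bits u → (Bits n → Bits n) × I := fun a =>
    (Function.update a.1.1.1 (P a.1.1) (setB κ (a.1.1.1 (P a.1.1)) a.2), a.1.1.2)
  let G : (Bits n → Bits n) × I → ((Bits n → Bits n) × I) × Bits u := fun ω =>
    ((Function.update ω.1 (P ω) (setB κ (ω.1 (P ω)) (g ω)), ω.2),
      fun t => bitAt (ω.1 (P ω)) (κ + (t : ℕ)))
  have hGF : ∀ a : S × Bits u, G (F a) = (a.1.1, a.2) := by
    rintro ⟨⟨ω, hω⟩, z⟩
    have e1 : P (F (⟨ω, hω⟩, z)) = P ω := hP ω hω _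
    have e2 : g (F (⟨ω, hω⟩, z)) = g ω := hQ ω hω _
    simp only [G, e1, e2]
    simp only [F, Function.update_self, Function.update_idem]
    refine Prod.ext (Prod.ext ?_ rfl) ?_
    · simp only
      rw [setB_setB _ _ _ (hg ω hω), Function.update_eq_self]
    · funext t
      exact bitAt_setB hn _ _ t
  have hinj : Function.Injective F := by
    intro a a' h
    have h2 := hGF a
    rw [h, hGF a'] at h2
    have h3 := congrArg Prod.fst h2
    have h4 := congrArg Prod.snd h2
    exact Prod.ext (Subtype.ext h3.symm) h4.symm
  have := Fintype.card_le_of_injective F hinj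
  rw [Fintype.card_prod] at this
  have hS : S.ncard = Fintype.card S := by
    rw [← Nat.card_coe_set_eq, Nat.card_eq_fintype_card]
  have hB : Fintype.card (Bits u) = 2 ^ u := by simp [Bits]
  rw [hS, ← hB]
  exact this

/-- The bad event for a fixed query position and a fixed branch. -/
def badSet {n u v s q m : ℕ} (κ W : ℕ) (A : MPC n s q m (Fin v → Bits u))
    (k2 : ℕ) (i2 : Fin m) (t2 : ℕ) (j b : ℕ) (a : ℕ → Fin v) :
    Set ((Bits n → Bits n) × (Fin v → Bits u)) :=
  {ω | mquery A ω.1 ω.2 k2 i2 t2 = branchE n u v W κ ω.1 ω.2 j a b ∧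
    ∀ (k1 : ℕ) (i1 : Fin m) (t1 : ℕ), t1 < q →
      (k1 < k2 ∨ (k1 = k2 ∧ i1 = i2 ∧ t1 < t2)) →
      mquery A ω.1 ω.2 k1 i1 t1 ≠ prevEntry n u v W κ ω.1 ω.2 j a b}

theorem badSet_card {n u v s q m κ W : ℕ} (A : MPC n s q m (Fin v → Bits u))
    (hn1 : W + 2 * u ≤ n) (hn2 : κ + u ≤ n)
    (k2 : ℕ) (i2 : Fin m) (t2 : ℕ) (ht2 : t2 < q) (j b : ℕ) (hj : 1 ≤ j)
    (hjb : j + b < 2 ^ W) (a : ℕ → Fin v) :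
    (badSet κ W A k2 i2 t2 j b a).ncard * 2 ^ u ≤
      Fintype.card ((Bits n → Bits n) × (Fin v → Bits u)) := by
  refine resample_card (κ := κ) hn2 _ (fun ω => prevEntry n u v W κ ω.1 ω.2 j a b)
    (fun ω t => bitAt (mquery A ω.1 ω.2 k2 i2 t2) (W + u + (t : ℕ))) ?_ ?_ ?_
  · rintro ω ⟨h1, _⟩ t
    rw [h1, branchE_rho hn1 _ _ _ hj]
  · rintro ω _ y
    apply prevEntry_agree _ _ hj
    intro i x ρ hi
    obtain ⟨x', ρ', hf⟩ := prevEntry_form (W := W) (κ := κ) ω.1 ω.2 j hj a b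
    apply Function.update_of_ne
    intro h
    rw [hf] at h
    have := lineStr_index_inj (by omega) (by omega) hjb h
    omega
  · rintro ω ⟨_, h2⟩ y
    funext t
    simp only
    rw [mquery_agree]
    · intro k1 hk1 i t ht
      exact Function.update_of_ne (h2 k1 i t ht (Or.inl hk1)) _ _
    · intro t1 ht1
      exact Function.update_of_ne (h2 k2 i2 t1 (by omega) (Or.inr ⟨rfl, rfl, ht1⟩)) _ _

/-- Extend a finite sequence `a_1, …, a_b`. -/
def extSeq {v b : ℕ} (d : Fin v) (a : Fin b → Fin v) (i : ℕ) : Fin v :=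
  if h : i - 1 < b then a ⟨i - 1, h⟩ else d

theorem prevEntry_congr {n u v W κ : ℕ} (RO : Bits n → Bits n) (X : Fin v → Bits u) (j : ℕ)
    (a a' : ℕ → Fin v) (b : ℕ) (h : ∀ d, 1 ≤ d → d ≤ b → a d = a' d) :
    prevEntry n u v W κ RO X j a b = prevEntry n u v W κ RO X j a' b := by
  unfold prevEntry
  split_ifs
  · rfl
  · exact branchE_congr RO X j a a' _ (fun d h1 h2 => h d h1 (by omega))

theorem geom_le_two_mul {v : ℕ} (hv : 2 ≤ v) (p : ℕ) :
    ∑ b : Fin (p + 1), v ^ (b : ℕ) ≤ 2 * v ^ p := by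
  rw [Fin.sum_univ_eq_sum_range (fun b => v ^ b)]
  induction p with
  | zero => simp
  | succ p ih =>
    rw [Finset.sum_range_succ]
    have : 2 * v ^ p ≤ v ^ (p + 1) := by
      rw [pow_succ, mul_comm]; exact Nat.mul_le_mul_left _ hv
    omega

/-- **Lemma 3.3 (up to an absolute constant `K`).**
In the Line setting, for every deterministic MPC algorithm (`m` machines, `s`-bit local
memory, at most `q` queries per machine per round) and every round `k ≥ 0`, the
probability over uniformly random `(RO, X)` of the event `E^{(k)}` — some query made
through round `k` equals a branch entry `e ∈ ∪_j V^{(j)}` without being preceded by a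
query equal to the previous entry of `e` — is at most `K·w·v^p·(k+1)·m·q·2^(−u)`.
A query is preceded by all queries of earlier rounds and by the same machine's earlier
queries in the same round; the previous entry of `e'_b` is `e'_{b−1}` for `b ≥ 1` and
`e_j` for `b = 0`. -/
theorem stmt8 : ∃ K : ℝ, 0 < K ∧
    ∀ (n u v w κ p W s q m : ℕ),
    1 ≤ u → 2 ≤ w → 1 ≤ κ → v = 2 ^ κ →
    p = ⌈(Real.logb 2 w) ^ 2⌉₊ → W = Nat.clog 2 (w + p + 2) →
    W + 2 * u ≤ n → κ + u ≤ n → 1 ≤ q → 1 ≤ m →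
    ∀ (A : MPC n s q m (Fin v → Bits u)) (k : ℕ),
    unifProb (fun ω : (Bits n → Bits n) × (Fin v → Bits u) =>
      ∃ k2 ≤ k, ∃ i2 : Fin m, ∃ t2 < q, ∃ j, 1 ≤ j ∧ j ≤ w ∧ ∃ b ≤ p, ∃ a : ℕ → Fin v,
        mquery A ω.1 ω.2 k2 i2 t2 = branchE n u v W κ ω.1 ω.2 j a b ∧
        ∀ (k1 : ℕ) (i1 : Fin m) (t1 : ℕ), k1 ≤ k → t1 < q →
          (k1 < k2 ∨ (k1 = k2 ∧ i1 = i2 ∧ t1 < t2)) →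
          mquery A ω.1 ω.2 k1 i1 t1 ≠
            (if b = 0 then lineE n u v W κ ω.1 ω.2 (j - 1)
             else branchE n u v W κ ω.1 ω.2 j a (b - 1))) ≤
    K * (w : ℝ) * (v : ℝ) ^ p * ((k : ℝ) + 1) * (m : ℝ) * (q : ℝ) *
      (2 : ℝ) ^ (-(u : ℝ)) := by
  refine ⟨2, by norm_num, ?_⟩
  intro n u v w κ p W s q m hu hw hκ hv hp hW hn1 hn2 hq hm A k
  have hv2 : 2 ≤ v := by
    rw [hv]
    calc 2 = 2 ^ 1 := rfl
      _ ≤ 2 ^ κ := Nat.pow_le_pow_right (by norm_num) hκ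
  have hWlt : w + p + 2 ≤ 2 ^ W := by
    rw [hW]; exact Nat.le_pow_clog (by norm_num) _
  let d : Fin v := ⟨0, by omega⟩
  let ι := Fin (k + 1) × Fin m × Fin q × Fin w × (Σ b : Fin (p + 1), Fin (b : ℕ) → Fin v)
  let B : ι → Set ((Bits n → Bits n) × (Fin v → Bits u)) := fun x =>
    badSet κ W A x.1 x.2.1 x.2.2.1 (x.2.2.2.1 + 1) x.2.2.2.2.1 (extSeq d x.2.2.2.2.2)
  set C := Fintype.card ((Bits n → Bits n) × (Fin v → Bits u)) with hC
  have hCpos : 0 < C := Fintype.card_pos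
  have hB : ∀ x, (B x).ncard * 2 ^ u ≤ C := by
    rintro ⟨k2, i2, t2, j, b, a⟩
    apply badSet_card A hn1 hn2 _ _ _ t2.2 _ _ (by omega)
    have := j.2
    have := b.2
    omega
  have hιcard : Fintype.card ι ≤ (k + 1) * (m * (q * (w * (2 * v ^ p)))) := by
    simp only [ι, Fintype.card_prod, Fintype.card_sigma, Fintype.card_fin, Fintype.card_fun]
    have := geom_le_two_mul hv2 p
    gcongr
  unfold unifProb
  set E := {ω : (Bits n → Bits n) × (Fin v → Bits u) | ∃ k2 ≤ k, ∃ i2 : Fin m, ∃ t2 < q, ∃ j, 1 ≤ j ∧ j ≤ w ∧ ∃ b ≤ p, ∃ a : ℕ → Fin v,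
        mquery A ω.1 ω.2 k2 i2 t2 = branchE n u v W κ ω.1 ω.2 j a b ∧
        ∀ (k1 : ℕ) (i1 : Fin m) (t1 : ℕ), k1 ≤ k → t1 < q →
          (k1 < k2 ∨ (k1 = k2 ∧ i1 = i2 ∧ t1 < t2)) →
          mquery A ω.1 ω.2 k1 i1 t1 ≠
            (if b = 0 then lineE n u v W κ ω.1 ω.2 (j - 1)
             else branchE n u v W κ ω.1 ω.2 j a (b - 1))} with hE
  have hsub : E ⊆ ⋃ x, B x := by
    rintro ω ⟨k2, hk2, i2, t2, ht2, j, hj1, hjw, b, hb, a, h1, h2⟩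
    rw [Set.mem_iUnion]
    refine ⟨(⟨k2, by omega⟩, i2, ⟨t2, ht2⟩, ⟨j - 1, by omega⟩,
      ⟨⟨b, by omega⟩, fun t => a (t + 1)⟩), ?_⟩
    have hjj : j - 1 + 1 = j := by omega
    have hext : ∀ e, 1 ≤ e → e ≤ b →
        a e = extSeq d (fun t : Fin b => a ((t : ℕ) + 1)) e := by
      intro e he1 he2
      have h3 : e - 1 < b := by omega
      have h4 : e - 1 + 1 = e := by omega
      simp only [extSeq, dif_pos h3, h4]
    simp only [B, badSet, Set.mem_ofPred_eq, hjj]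
    refine ⟨h1.trans (branchE_congr _ _ _ _ _ _ hext), ?_⟩
    intro k1 i1 t1 ht1 hpre
    rw [← prevEntry_congr _ _ _ _ _ _ hext]
    exact h2 k1 i1 t1 (by omega) ht1 hpre
  have hEcard : E.ncard * 2 ^ u ≤ Fintype.card ι * C := by
    have h1 : E.ncard ≤ ∑ x, (B x).ncard :=
      (Set.ncard_le_ncard hsub (Set.toFinite _)).trans (Set.ncard_iUnion_le_of_fintype B)
    calc E.ncard * 2 ^ u ≤ (∑ x, (B x).ncard) * 2 ^ u := Nat.mul_le_mul_right _ h1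
      _ = ∑ x, (B x).ncard * 2 ^ u := Finset.sum_mul _ _ _
      _ ≤ ∑ _x : ι, C := Finset.sum_le_sum (fun x _ => hB x)
      _ = Fintype.card ι * C := by simp
  have hfin : E.ncard * 2 ^ u ≤ (k + 1) * (m * (q * (w * (2 * v ^ p)))) * C :=
    hEcard.trans (Nat.mul_le_mul_right _ hιcard)
  have hfinR : (E.ncard : ℝ) * 2 ^ u ≤ (k + 1) * (m * (q * (w * (2 * v ^ p)))) * C := by
    exact_mod_cast hfin
  have hCR : (0 : ℝ) < C := by exact_mod_cast hCpos
  have h2u : (0 : ℝ) < 2 ^ u := by positivity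
  rw [div_le_iff₀ hCR, Real.rpow_neg (by norm_num), Real.rpow_natCast]
  rw [← le_div_iff₀ h2u] at hfinR
  refine hfinR.trans (le_of_eq ?_)
  field_simp
end

section
/- There is an absolute constant K such that the following holds in the SimLine setting. Assume u > log₂ q + log₂ v, let h := s/(u − log₂ q − log₂ v) + 1 (a real number), and assume h ≤ v. For every deterministic MPC algorithm with m machines, local memory s bits, and at most q oracle queries per machine per round, and every integer k with 0 ≤ k < w/h − 1, the probability over uniformly random (RO, X) that Q^{(≤k)} ∩ C^{(k+1)} ≠ ∅ is at most K·(k+1)·(m·2^(−(u − log₂ q − log₂ v)) + w·m·q·2^(−u) + w²·2^(−u)). (The paper's inductive Claim in the proof of Lemma A.1 states the bound (k+1)·(m·2^(−(u − log₂ q − log₂ v)) + w·m·q·2^(−u)).) -/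
/-- The SimLine query string built from the step counter `k` (`0`-based, so paper index
`k+1`) and the current chain value `r`: the concatenation of `x_{(k mod v)+1}` (1-based),
`r`, and `n − 2u` zeros. -/
def simStr (n u v : ℕ) (X : Fin v → Bits u) (k : ℕ) (r : Bits u) : Bits n := fun j =>
  if (j : ℕ) < u then bitAt (getX X (k % v)) (j : ℕ)
  else if (j : ℕ) < 2 * u then bitAt r ((j : ℕ) - u)
  else false

/-- `simR n u v RO X k` is the paper's `r_{k+1}`:  `r_1 = 0^u` and
`r_{i+1} = ` the first `u` bits of `RO(s_i)`. -/
def simR (n u v : ℕ) (RO : Bits n → Bits n) (X : Fin v → Bits u) : ℕ → Bits u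
  | 0 => fun _ => false
  | k + 1 => fun j => bitAt (RO (simStr n u v X k (simR n u v RO X k))) (j : ℕ)

/-- `simS n u v RO X k` is the paper's `s_{k+1}`. -/
def simS (n u v : ℕ) (RO : Bits n → Bits n) (X : Fin v → Bits u) (k : ℕ) : Bits n :=
  simStr n u v X k (simR n u v RO X k)
open Classical in
theorem unifProb_mono {Ω : Type} [Fintype Ω] {P Q : Ω → Prop} (h : ∀ ω, P ω → Q ω) :
    unifProb P ≤ unifProb Q := by
  unfold unifProb
  gcongr
  · exact Set.toFinite _
  · exact h _

theorem unifProb_or {Ω : Type} [Fintype Ω] (P Q : Ω → Prop) :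
    unifProb (fun ω => P ω ∨ Q ω) ≤ unifProb P + unifProb Q := by
  unfold unifProb
  rw [← add_div]
  gcongr
  exact_mod_cast Set.ncard_union_le {ω | P ω} {ω | Q ω}

theorem unifProb_exists {Ω ι : Type} [Fintype Ω] (T : Finset ι) (P : ι → Ω → Prop) (c : ℝ)
    (hc : ∀ a ∈ T, unifProb (P a) ≤ c) :
    unifProb (fun ω => ∃ a ∈ T, P a ω) ≤ T.card * c := by
  classical
  induction T using Finset.induction_on with
  | empty => simp [unifProb]
  | insert a T ha ih =>
    have h1 : unifProb (fun ω => ∃ b ∈ insert a T, P b ω) ≤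
        unifProb (fun ω => P a ω ∨ ∃ b ∈ T, P b ω) := by
      apply unifProb_mono
      rintro ω ⟨b, hb, hP⟩
      rcases Finset.mem_insert.1 hb with rfl | hb
      · exact Or.inl hP
      · exact Or.inr ⟨b, hb, hP⟩
    have h2 := unifProb_or (P a) (fun ω => ∃ b ∈ T, P b ω)
    have h3 := hc a (Finset.mem_insert_self _ _)
    have h4 := ih (fun b hb => hc b (Finset.mem_insert_of_mem hb))
    rw [Finset.card_insert_of_notMem ha]
    push_cast
    linarith

/-- first `u` bits -/
def fstBits (n u : ℕ) (y : Bits n) : Bits u := fun j => bitAt y (j : ℕ)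

/-- replace the first `u` bits -/
def setFst {n u : ℕ} (y : Bits n) (a : Bits u) : Bits n := fun j =>
  if h : (j : ℕ) < u then a ⟨j, h⟩ else y j

/-- bits `u .. 2u` -/
def sndBits (n u : ℕ) (y : Bits n) : Bits u := fun j => bitAt y (u + (j : ℕ))

theorem fst_setFst {n u : ℕ} (hu : u ≤ n) (y : Bits n) (a : Bits u) :
    fstBits n u (setFst y a) = a := by
  funext j
  have := j.2
  have h : (j : ℕ) < n := by omega
  simp [fstBits, setFst, bitAt, h]

theorem setFst_inj {n u : ℕ} {y y' : Bits n} {a a' : Bits u}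
    (h : setFst y a = setFst y' a') (hf : fstBits n u y = fstBits n u y') : y = y' := by
  funext j
  by_cases hj : (j : ℕ) < u
  · have := congrFun hf ⟨j, hj⟩
    simpa [fstBits, bitAt] using this
  · have := congrFun h j
    simpa [setFst, hj] using this

theorem fst_simStr {n u v : ℕ} (hn : 2 * u ≤ n) (X : Fin v → Bits u) (k : ℕ) (r : Bits u) :
    fstBits n u (simStr n u v X k r) = getX X (k % v) := by
  funext j
  have := j.2
  have h : (j : ℕ) < n := by omega
  simp [fstBits, simStr, bitAt, h]

theorem snd_simStr {n u v : ℕ} (hn : 2 * u ≤ n) (X : Fin v → Bits u) (k : ℕ) (r : Bits u) :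
    sndBits n u (simStr n u v X k r) = r := by
  funext j
  have := j.2
  have h : u + (j : ℕ) < n := by omega
  have h2 : u + (j : ℕ) < 2 * u := by omega
  simp [sndBits, simStr, bitAt, h, h2]

theorem simR_succ (n u v : ℕ) (RO : Bits n → Bits n) (X : Fin v → Bits u) (k : ℕ) :
    simR n u v RO X (k + 1) = fstBits n u (RO (simS n u v RO X k)) := rfl

open Classical in
/-- Resampling lemma. -/
theorem resample {n u v : ℕ} (hu : u ≤ n)
    (B : (Bits n → Bits n) × (Fin v → Bits u) → Prop)
    (z : (Bits n → Bits n) × (Fin v → Bits u) → Bits n)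
    (g : (Bits n → Bits n) × (Fin v → Bits u) → Bits u)
    (hz : ∀ ω, B ω → ∀ y, z (Function.update ω.1 (z ω) y, ω.2) = z ω)
    (hg : ∀ ω, B ω → ∀ y, g (Function.update ω.1 (z ω) y, ω.2) = g ω)
    (hB : ∀ ω, B ω → fstBits n u (ω.1 (z ω)) = g ω) :
    unifProb B ≤ (2 : ℝ) ^ (-(u : ℝ)) := by
  let φ : {ω // B ω} × Bits u → (Bits n → Bits n) × (Fin v → Bits u) := fun p =>
    (Function.update p.1.1.1 (z p.1.1) (setFst (p.1.1.1 (z p.1.1)) p.2), p.1.1.2)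
  have hφ : Function.Injective φ := by
    rintro ⟨⟨ω, hω⟩, a⟩ ⟨⟨ω', hω'⟩, a'⟩ h
    have h1 : z ω = z ω' := by
      have e1 := hz ω hω (setFst (ω.1 (z ω)) a)
      have e2 := hz ω' hω' (setFst (ω'.1 (z ω')) a')
      rw [← e1, ← e2]; exact congrArg z h
    have h2 : g ω = g ω' := by
      have e1 := hg ω hω (setFst (ω.1 (z ω)) a)
      have e2 := hg ω' hω' (setFst (ω'.1 (z ω')) a')
      rw [← e1, ← e2]; exact congrArg g h
    have hX : ω.2 = ω'.2 := (Prod.ext_iff.1 h).2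
    have hR : Function.update ω.1 (z ω) (setFst (ω.1 (z ω)) a) =
      Function.update ω'.1 (z ω') (setFst (ω'.1 (z ω')) a') := (Prod.ext_iff.1 h).1
    have hz' : setFst (ω.1 (z ω)) a = setFst (ω'.1 (z ω')) a' := by
      have := congrFun hR (z ω)
      rw [Function.update_self, h1, Function.update_self] at this
      rw [h1]; exact this
    have ha : a = a' := by
      rw [← fst_setFst hu (ω.1 (z ω)) a, hz', fst_setFst hu]
    have hzz : ω.1 (z ω) = ω'.1 (z ω') := by
      apply setFst_inj hz'
      rw [hB ω hω, hB ω' hω', h2]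
    have hRO : ω.1 = ω'.1 := by
      funext x
      by_cases hx : x = z ω
      · rw [hx, hzz, h1]
      · have := congrFun hR x
        rwa [Function.update_of_ne hx, Function.update_of_ne (h1 ▸ hx)] at this
    have : ω = ω' := Prod.ext hRO hX
    subst this
    subst ha
    rfl
  have hc := Fintype.card_le_of_injective φ hφ
  rw [Fintype.card_prod, Fintype.card_fun, Fintype.card_bool, Fintype.card_fin] at hc
  unfold unifProb
  have hn : Set.ncard {ω | B ω} = Fintype.card {ω // B ω} := by
    rw [← Nat.card_coe_set_eq, Nat.card_eq_fintype_card]; rfl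
  rw [hn, Real.rpow_neg (by norm_num), Real.rpow_natCast, ← one_div,
    div_le_div_iff₀ (by exact_mod_cast Fintype.card_pos) (by positivity), one_mul]
  exact_mod_cast hc

theorem advAns_update {n : ℕ} (RO : Bits n → Bits n) (f : List (Bits n) → Bits n)
    (z y : Bits n) (t : ℕ) (h : ∀ t' < t, advQ n RO f t' ≠ z) :
    advAns n (Function.update RO z y) f t = advAns n RO f t := by
  induction t with
  | zero => rfl
  | succ t ih =>
    have := ih (fun t' ht' => h t' (by omega))
    have h2 : f (advAns n RO f t) ≠ z := h t (by omega)
    simp only [advAns]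
    rw [this, Function.update_of_ne h2]

theorem mstate_update {n s q m : ℕ} {I : Type} (A : MPC n s q m I) (RO : Bits n → Bits n) (X : I)
    (z y : Bits n) (k : ℕ) (h : ∀ k' < k, ∀ i, ∀ t < q, mquery A RO X k' i t ≠ z) :
    mstate A (Function.update RO z y) X k = mstate A RO X k := by
  induction k with
  | zero => rfl
  | succ k ih =>
    have h1 := ih (fun k' hk' => h k' (by omega))
    funext j
    simp only [mstate]
    rw [h1]
    congr 3
    funext i
    rw [advAns_update]
    exact h k (by omega) i

theorem mquery_update {n s q m : ℕ} {I : Type} (A : MPC n s q m I) (RO : Bits n → Bits n) (X : I)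
    (z y : Bits n) (k : ℕ) (i : Fin m) (t : ℕ)
    (h : ∀ k' < k, ∀ i, ∀ t < q, mquery A RO X k' i t ≠ z)
    (h2 : ∀ t' < t, mquery A RO X k i t' ≠ z) :
    mquery A (Function.update RO z y) X k i t = mquery A RO X k i t := by
  unfold mquery advQ
  rw [mstate_update A RO X z y k h, advAns_update]
  exact h2

theorem simR_update {n u v : ℕ} (RO : Bits n → Bits n) (X : Fin v → Bits u)
    (z y : Bits n) (j : ℕ) (h : ∀ a < j, simS n u v RO X a ≠ z) :
    simR n u v (Function.update RO z y) X j = simR n u v RO X j := by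
  induction j with
  | zero => rfl
  | succ j ih =>
    have h1 := ih (fun a ha => h a (by omega))
    have h2 := h j (by omega)
    rw [simR_succ, simR_succ]
    have h3 : simS n u v (Function.update RO z y) X j = simS n u v RO X j := by
      unfold simS; rw [h1]
    rw [h3, Function.update_of_ne h2]

theorem simS_update {n u v : ℕ} (RO : Bits n → Bits n) (X : Fin v → Bits u)
    (z y : Bits n) (j : ℕ) (h : ∀ a < j, simS n u v RO X a ≠ z) :
    simS n u v (Function.update RO z y) X j = simS n u v RO X j := by
  unfold simS
  rw [simR_update RO X z y j h]

/-- `s_j` does not occur earlier in the chain. -/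
def Fresh (n u v : ℕ) (RO : Bits n → Bits n) (X : Fin v → Bits u) (j : ℕ) : Prop :=
  ∀ a < j, simS n u v RO X a ≠ simS n u v RO X j

/-- The skip event for a fixed query and a fixed chain position. -/
def Skip {n u v s q m : ℕ} (A : MPC n s q m (Fin v → Bits u)) (RO : Bits n → Bits n)
    (X : Fin v → Bits u) (k : ℕ) (i : Fin m) (t j : ℕ) : Prop :=
  mquery A RO X k i t = simS n u v RO X (j + 1) ∧
  (∀ k' < k, ∀ i, ∀ t < q, mquery A RO X k' i t ≠ simS n u v RO X j) ∧
  (∀ t' < t, mquery A RO X k i t' ≠ simS n u v RO X j)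

theorem skip_prob {n u v s q m : ℕ} (hn : 2 * u ≤ n) (A : MPC n s q m (Fin v → Bits u))
    (k : ℕ) (i : Fin m) (t j : ℕ) :
    unifProb (fun ω : (Bits n → Bits n) × (Fin v → Bits u) =>
      Fresh n u v ω.1 ω.2 j ∧ Skip A ω.1 ω.2 k i t j) ≤ (2 : ℝ) ^ (-(u : ℝ)) := by
  apply resample (by omega) _ (fun ω => simS n u v ω.1 ω.2 j)
    (fun ω => sndBits n u (mquery A ω.1 ω.2 k i t))
  · rintro ω ⟨hf, h1, h2, h3⟩ y
    exact simS_update _ _ _ _ _ hf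
  · rintro ω ⟨hf, h1, h2, h3⟩ y
    rw [mquery_update A _ _ _ _ _ _ _ h2 h3]
  · rintro ω ⟨hf, h1, h2, h3⟩
    rw [h1]
    unfold simS
    rw [snd_simStr hn]
    rfl

theorem coll_prob {n u v : ℕ} (hn : 2 * u ≤ n) (a b : ℕ) (hab : a ≤ b) :
    unifProb (fun ω : (Bits n → Bits n) × (Fin v → Bits u) =>
      Fresh n u v ω.1 ω.2 b ∧ simS n u v ω.1 ω.2 a = simS n u v ω.1 ω.2 (b + 1))
      ≤ (2 : ℝ) ^ (-(u : ℝ)) := by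
  apply resample (by omega) _ (fun ω => simS n u v ω.1 ω.2 b)
    (fun ω => simR n u v ω.1 ω.2 a)
  · rintro ω ⟨hf, h1⟩ y
    exact simS_update _ _ _ _ _ hf
  · rintro ω ⟨hf, h1⟩ y
    exact simR_update _ _ _ _ _ (fun c hc => hf c (by omega))
  · rintro ω ⟨hf, h1⟩
    have := congrArg (sndBits n u) h1
    unfold simS at this
    rw [snd_simStr hn, snd_simStr hn] at this
    rw [this]; rfl

theorem fresh_or_coll {n u v : ℕ} (RO : Bits n → Bits n) (X : Fin v → Bits u) (j : ℕ) :
    Fresh n u v RO X j ∨ ∃ b < j, ∃ a ≤ b, Fresh n u v RO X b ∧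
      simS n u v RO X a = simS n u v RO X (b + 1) := by
  classical
  by_cases hF : Fresh n u v RO X j
  · exact Or.inl hF
  right
  have hex : ∃ j, ¬ Fresh n u v RO X j := ⟨j, hF⟩
  have hmin := fun m hm => not_not.1 (Nat.find_min hex (m := m) hm)
  have hsp := Nat.find_spec hex
  have hle : Nat.find hex ≤ j := Nat.find_min' hex hF
  generalize Nat.find hex = c at hmin hsp hle
  unfold Fresh at hsp
  push Not at hsp
  obtain ⟨a, hac, he⟩ := hsp
  obtain ⟨b, rfl⟩ : ∃ b, c = b + 1 := ⟨c - 1, by omega⟩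
  exact ⟨b, by omega, a, by omega, hmin b (by omega), he⟩

/-- Machine `i` in round `k` queries `p` consecutive blocks starting from `c`. -/
def Many {n u v s q m : ℕ} (A : MPC n s q m (Fin v → Bits u)) (RO : Bits n → Bits n)
    (X : Fin v → Bits u) (k : ℕ) (i : Fin m) (c p : ℕ) : Prop :=
  ∀ e < p, ∃ t < q, fstBits n u (mquery A RO X k i t) = getX X ((c + e) % v)

/-- counting inputs whose blocks in `T` belong to `S`. -/
theorem count_blocks {u v p q : ℕ} (hv : 0 < v) (hp : p ≤ v) (c : ℕ) (S : Finset (Bits u))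
    (hS : S.card ≤ q) :
    Set.ncard {X : Fin v → Bits u | ∀ e < p, getX X ((c + e) % v) ∈ S} ≤
      q ^ p * (2 ^ u) ^ (v - p) := by
  classical
  let F : ℕ → Fin v := fun e => ⟨(c + e) % v, Nat.mod_lt _ hv⟩
  let T : Finset (Fin v) := (Finset.range p).image F
  have hT : T.card = p := by
    rw [Finset.card_image_of_injOn, Finset.card_range]
    intro a ha b hb hab
    simp only [Finset.coe_range, Set.mem_Iio] at ha hb
    have h : (c + a) % v = (c + b) % v := congrArg Fin.val hab
    have h2 : a ≡ b [MOD v] := Nat.ModEq.add_left_cancel' c h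
    exact Nat.ModEq.eq_of_lt_of_lt h2 (by omega) (by omega)
  let P := Fintype.piFinset (fun b : Fin v => if b ∈ T then S else Finset.univ)
  have hsub : {X : Fin v → Bits u | ∀ e < p, getX X ((c + e) % v) ∈ S} ⊆ (P : Set _) := by
    intro X hX
    simp only [P, Finset.mem_coe, Fintype.mem_piFinset]
    intro b
    split_ifs with hb
    · obtain ⟨e, he, rfl⟩ := Finset.mem_image.1 hb
      have := hX e (Finset.mem_range.1 he)
      simpa [getX, F, Nat.mod_lt _ hv] using this
    · exact Finset.mem_univ _
  refine (Set.ncard_le_ncard hsub (Set.toFinite _)).trans ?_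
  rw [Set.ncard_coe_finset, Fintype.card_piFinset]
  have : ∀ b : Fin v, (if b ∈ T then S else Finset.univ).card
      = if b ∈ T then S.card else 2 ^ u := by
    intro b; split_ifs <;> simp
  simp only [this]
  rw [Finset.prod_ite, Finset.prod_const, Finset.prod_const]
  have h1 : (Finset.univ.filter (fun b => b ∈ T)).card = p := by
    rw [← hT]; congr 1; ext; simp
  have h2 : (Finset.univ.filter (fun b => b ∉ T)).card = v - p := by
    have h3 := Finset.card_compl T
    rw [hT, Fintype.card_fin] at h3
    rw [← h3]
    congr 1; ext; simp
  rw [h1, h2]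
  gcongr

theorem many_count {n u v s q m : ℕ} (A : MPC n s q m (Fin v → Bits u)) (RO : Bits n → Bits n)
    (k : ℕ) (i : Fin m) (c p : ℕ) (hv : 0 < v) (hp : p ≤ v) :
    Set.ncard {X : Fin v → Bits u | Many A RO X k i c p} ≤
      2 ^ s * (q ^ p * (2 ^ u) ^ (v - p)) := by
  classical
  let S : Bits s → Finset (Bits u) := fun σ =>
    (Finset.range q).image (fun t => fstBits n u (advQ n RO (A.qf k i σ) t))
  have hS : ∀ σ, (S σ).card ≤ q := fun σ => Finset.card_image_le.trans (by simp)
  have hsub : {X : Fin v → Bits u | Many A RO X k i c p} ⊆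
      ⋃ σ ∈ (Finset.univ : Finset (Bits s)),
        {X : Fin v → Bits u | ∀ e < p, getX X ((c + e) % v) ∈ S σ} := by
    intro X hX
    simp only [Set.mem_iUnion]
    refine ⟨mstate A RO X k i, Finset.mem_univ _, ?_⟩
    intro e he
    obtain ⟨t, ht, h⟩ := hX e he
    exact Finset.mem_image.2 ⟨t, Finset.mem_range.2 ht, h⟩
  refine (Set.ncard_le_ncard hsub (Set.toFinite _)).trans ?_
  refine (Finset.set_ncard_biUnion_le _ _).trans ?_
  refine (Finset.sum_le_card_nsmul _ _ _ (fun σ _ => count_blocks hv hp c (S σ) (hS σ))).trans ?_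
  simp

theorem unifProb_prod {α β : Type} [Fintype α] [Fintype β] [Nonempty α] [Nonempty β]
    (P : α × β → Prop) (c : ℝ) (hc : ∀ a, (Set.ncard {b | P (a, b)} : ℝ) ≤ c * Fintype.card β) :
    unifProb P ≤ c := by
  classical
  unfold unifProb
  rw [div_le_iff₀ (by exact_mod_cast Fintype.card_pos)]
  have hsub : {ω | P ω} ⊆ ⋃ a ∈ (Finset.univ : Finset α), (Prod.mk a) '' {b | P (a, b)} := by
    rintro ⟨a, b⟩ h
    simp only [Set.mem_iUnion]
    exact ⟨a, Finset.mem_univ _, b, h, rfl⟩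
  have h1 : Set.ncard {ω | P ω} ≤ ∑ a : α, Set.ncard {b | P (a, b)} := by
    refine (Set.ncard_le_ncard hsub (Set.toFinite _)).trans ?_
    refine (Finset.set_ncard_biUnion_le _ _).trans ?_
    exact Finset.sum_le_sum (fun a _ => Set.ncard_image_le (Set.toFinite _))
  have h2 : (Set.ncard {ω | P ω} : ℝ) ≤ ∑ a : α, (Set.ncard {b | P (a, b)} : ℝ) := by
    exact_mod_cast h1
  refine h2.trans ((Finset.sum_le_sum (fun a _ => hc a)).trans ?_)
  rw [Finset.sum_const, Finset.card_univ, Fintype.card_prod, nsmul_eq_mul]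
  push_cast
  apply le_of_eq; ring

theorem many_prob {n u v s q m : ℕ} (A : MPC n s q m (Fin v → Bits u))
    (k : ℕ) (i : Fin m) (c p : ℕ) (hv : 2 ≤ v) (hq : 1 ≤ q) (hp : p ≤ v) (δ : ℝ)
    (hδ : δ = (u : ℝ) - Real.logb 2 q - Real.logb 2 v) (hs : (s : ℝ) + δ ≤ p * δ) :
    unifProb (fun ω : (Bits n → Bits n) × (Fin v → Bits u) => Many A ω.1 ω.2 k i c p)
      ≤ (2 : ℝ) ^ (-δ) := by
  apply unifProb_prod
  intro RO
  have h := many_count A RO k i c p (by omega) hp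
  have h' : (Set.ncard {X : Fin v → Bits u | Many A RO X k i c p} : ℝ) ≤
      2 ^ s * (q ^ p * (2 ^ u) ^ (v - p)) := by exact_mod_cast h
  refine h'.trans ?_
  have hcard : (Fintype.card (Fin v → Bits u) : ℝ) = (2 ^ u) ^ p * (2 ^ u) ^ (v - p) := by
    rw [← pow_add, Nat.add_sub_cancel' hp]; simp
  rw [hcard, ← mul_assoc, ← mul_assoc]
  apply mul_le_mul_of_nonneg_right _ (by positivity)
  have hq0 : (0 : ℝ) < q := by exact_mod_cast hq
  have e1 : (q : ℝ) ^ p = (2 : ℝ) ^ (Real.logb 2 q * p) := by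
    rw [Real.rpow_mul (by norm_num), Real.rpow_logb (by norm_num) (by norm_num) hq0,
      Real.rpow_natCast]
  have e2 : (2 : ℝ) ^ s = (2 : ℝ) ^ (s : ℝ) := (Real.rpow_natCast _ _).symm
  have e3 : ((2 : ℝ) ^ u) ^ p = (2 : ℝ) ^ ((u : ℝ) * p) := by
    rw [Real.rpow_mul (by norm_num), Real.rpow_natCast, Real.rpow_natCast]
  rw [e1, e2, e3, ← Real.rpow_add (by norm_num), ← Real.rpow_add (by norm_num)]
  apply Real.rpow_le_rpow_of_exponent_le (by norm_num)
  have hlv : 0 ≤ Real.logb 2 v :=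
    Real.logb_nonneg (by norm_num) (by exact_mod_cast (by omega : 1 ≤ v))
  have : 0 ≤ (p : ℝ) * Real.logb 2 v := by positivity
  have e4 : (p : ℝ) * δ = u * p - Real.logb 2 q * p - p * Real.logb 2 v := by rw [hδ]; ring
  linarith

/-- The deterministic part. -/
theorem determ {n u v s q m w : ℕ} (hn : 2 * u ≤ n) (A : MPC n s q m (Fin v → Bits u))
    (RO : Bits n → Bits n) (X : Fin v → Bits u) (h : ℝ) (hh : 1 ≤ h) (k : ℕ)
    (hskip : ∀ k' ≤ k, ∀ i, ∀ t < q, ∀ j, j + 1 < w → ¬ Skip A RO X k' i t j)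
    (hmany : ∀ k' ≤ k, ∀ i, ¬ Many A RO X k' i (⌊(k' : ℝ) * h⌋₊ + 1) ⌈h⌉₊) :
    ∀ k' ≤ k, ∀ i, ∀ t < q, ∀ j < w, mquery A RO X k' i t = simS n u v RO X j →
      (j : ℝ) ≤ (k' + 1) * h := by
  intro k'
  induction k' using Nat.strong_induction_on with
  | _ k' ih =>
  intro hk i t ht j hj hq
  by_contra hlt
  push Not at hlt
  set c := ⌊(k' : ℝ) * h⌋₊ + 1 with hc
  have hc1 : (k' : ℝ) * h < c := by rw [hc]; push_cast; exact Nat.lt_floor_add_one _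
  have hc2 : (c : ℝ) ≤ k' * h + 1 := by
    rw [hc]; push_cast
    have := Nat.floor_le (a := (k' : ℝ) * h) (by positivity)
    linarith
  have key : ∀ d, c + d ≤ j → ∃ t' < q, mquery A RO X k' i t' = simS n u v RO X (j - d) := by
    intro d
    induction d with
    | zero => intro _; exact ⟨t, ht, hq⟩
    | succ d ihd =>
      intro hd
      obtain ⟨t', ht', he⟩ := ihd (by omega)
      have hns := hskip k' hk i t' ht' (j - (d + 1)) (by omega)
      have e : j - (d + 1) + 1 = j - d := by omega
      unfold Skip at hns
      rw [e] at hns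
      by_contra hcon
      push Not at hcon
      apply hns
      refine ⟨he, ?_, fun t'' ht'' => hcon t'' (by omega)⟩
      intro k'' hk'' i' t'' ht'' heq
      have h1 := ih k'' hk'' (by omega) i' t'' ht'' (j - (d + 1)) (by omega) heq
      have h2 : (c : ℝ) ≤ ((j - (d + 1) : ℕ) : ℝ) := by exact_mod_cast (by omega)
      have h3 : ((k'' : ℝ) + 1) ≤ k' := by exact_mod_cast hk''
      have h4 : ((k'' : ℝ) + 1) * h ≤ k' * h := by gcongr
      linarith
  apply hmany k' hk i
  intro e he
  have hce : c + e ≤ j := by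
    have h1 : (⌈h⌉₊ : ℝ) < h + 1 := Nat.ceil_lt_add_one (by linarith)
    have h2 : ((e + 1 : ℕ) : ℝ) ≤ ⌈h⌉₊ := by exact_mod_cast he
    have h3 : (c : ℝ) + e < j + 1 := by push_cast at h2; linarith
    have : c + e < j + 1 := by exact_mod_cast h3
    omega
  obtain ⟨t', ht', hq'⟩ := key (j - (c + e)) (by omega)
  refine ⟨t', ht', ?_⟩
  rw [hq', show j - (j - (c + e)) = c + e by omega]
  exact fst_simStr hn _ _ _

/-- **Inductive claim in the proof of Lemma A.1.**
There is an absolute constant `K` such that, in the SimLine setting with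
`u > log₂ q + log₂ v`, `h := s/(u − log₂ q − log₂ v) + 1 ≤ v`, for every deterministic
MPC algorithm and every round `k` with `0 ≤ k < w/h − 1`, the probability over uniformly
random `(RO, X)` that some query made through round `k` hits
`C^{(k+1)} = {s_i : (k+1)h + 1 < i ≤ w}` is at most
`K·(k+1)·(m·2^(−(u − log₂q − log₂v)) + w·m·q·2^(−u) + w²·2^(−u))`. -/
theorem stmt12 : ∃ K : ℝ, 0 < K ∧
    ∀ (n u v w s q m : ℕ), 1 ≤ u → 2 * u ≤ n → 2 ≤ v → 2 ≤ w → 1 ≤ s → 1 ≤ q → 1 ≤ m →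
    Real.logb 2 q + Real.logb 2 v < (u : ℝ) →
    ∀ h : ℝ, h = (s : ℝ) / ((u : ℝ) - Real.logb 2 q - Real.logb 2 v) + 1 → h ≤ (v : ℝ) →
    ∀ (A : MPC n s q m (Fin v → Bits u)) (k : ℕ), (k : ℝ) < (w : ℝ) / h - 1 →
    unifProb (fun ω : (Bits n → Bits n) × (Fin v → Bits u) =>
      ∃ k' ≤ k, ∃ i : Fin m, ∃ t < q, ∃ idx : ℕ, idx ≤ w ∧
        ((k : ℝ) + 1) * h + 1 < (idx : ℝ) ∧
        mquery A ω.1 ω.2 k' i t = simS n u v ω.1 ω.2 (idx - 1)) ≤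
    K * ((k : ℝ) + 1) *
      ((m : ℝ) * (2 : ℝ) ^ (-((u : ℝ) - Real.logb 2 q - Real.logb 2 v)) +
        (w : ℝ) * m * q * (2 : ℝ) ^ (-(u : ℝ)) +
        (w : ℝ) ^ 2 * (2 : ℝ) ^ (-(u : ℝ))) := by
  refine ⟨1, one_pos, ?_⟩
  intro n u v w s q m hu hn hv hw hs hq hm hlog h hh hhv A k _
  set δ : ℝ := (u : ℝ) - Real.logb 2 q - Real.logb 2 v with hδ
  have hδ0 : 0 < δ := by rw [hδ]; linarith
  have hh1 : 1 ≤ h := by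
    rw [hh]; have : 0 ≤ (s : ℝ) / δ := by positivity
    linarith
  have hp : ⌈h⌉₊ ≤ v := Nat.ceil_le.2 hhv
  have hsp : (s : ℝ) + δ ≤ (⌈h⌉₊ : ℝ) * δ := by
    have h1 : h ≤ (⌈h⌉₊ : ℝ) := Nat.le_ceil _
    have h2 : h * δ = s + δ := by rw [hh]; field_simp
    rw [← h2]; gcongr
  let T1 : Finset (ℕ × Fin m) := Finset.range (k + 1) ×ˢ Finset.univ
  let T2 : Finset (ℕ × Fin m × ℕ × ℕ) :=
    Finset.range (k + 1) ×ˢ Finset.univ ×ˢ Finset.range q ×ˢ Finset.range w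
  let T3 : Finset (ℕ × ℕ) := (Finset.range w ×ˢ Finset.range w).filter (fun x => x.1 ≤ x.2)
  let Ω := (Bits n → Bits n) × (Fin v → Bits u)
  let P1 : ℕ × Fin m → Ω → Prop := fun x ω =>
    Many A ω.1 ω.2 x.1 x.2 (⌊(x.1 : ℝ) * h⌋₊ + 1) ⌈h⌉₊
  let P2 : ℕ × Fin m × ℕ × ℕ → Ω → Prop := fun x ω =>
    Fresh n u v ω.1 ω.2 x.2.2.2 ∧ Skip A ω.1 ω.2 x.1 x.2.1 x.2.2.1 x.2.2.2
  let P3 : ℕ × ℕ → Ω → Prop := fun x ω =>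
    Fresh n u v ω.1 ω.2 x.2 ∧ simS n u v ω.1 ω.2 x.1 = simS n u v ω.1 ω.2 (x.2 + 1)
  have b1 := unifProb_exists T1 P1 ((2 : ℝ) ^ (-δ))
    (fun x _ => many_prob A x.1 x.2 _ _ hv hq hp δ hδ hsp)
  have b2 := unifProb_exists T2 P2 ((2 : ℝ) ^ (-(u : ℝ)))
    (fun x _ => skip_prob hn A _ _ _ _)
  have b3 := unifProb_exists T3 P3 ((2 : ℝ) ^ (-(u : ℝ)))
    (fun x hx => coll_prob hn _ _ (Finset.mem_filter.1 hx).2)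
  have c1 : (T1.card : ℝ) = (k + 1) * m := by simp [T1]
  have c2 : (T2.card : ℝ) = (k + 1) * (m * (q * w)) := by simp [T2]
  have c3 : (T3.card : ℝ) ≤ w ^ 2 := by
    have : T3.card ≤ w ^ 2 := (Finset.card_filter_le _ _).trans (by simp [sq])
    exact_mod_cast this
  have o1 := unifProb_or (fun ω : Ω => ∃ a ∈ T1, P1 a ω)
    (fun ω => (∃ a ∈ T2, P2 a ω) ∨ (∃ a ∈ T3, P3 a ω))
  have o2 := unifProb_or (fun ω : Ω => ∃ a ∈ T2, P2 a ω) (fun ω => ∃ a ∈ T3, P3 a ω)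
  have hmono : unifProb (fun ω : Ω =>
      ∃ k' ≤ k, ∃ i : Fin m, ∃ t < q, ∃ idx : ℕ, idx ≤ w ∧
        ((k : ℝ) + 1) * h + 1 < (idx : ℝ) ∧
        mquery A ω.1 ω.2 k' i t = simS n u v ω.1 ω.2 (idx - 1)) ≤
      unifProb (fun ω : Ω => (∃ a ∈ T1, P1 a ω) ∨ (∃ a ∈ T2, P2 a ω) ∨ (∃ a ∈ T3, P3 a ω)) := by
    apply unifProb_mono
    rintro ⟨RO, X⟩ ⟨k', hk', i, t, ht, idx, hidx, hlt, heq⟩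
    by_contra hno
    push Not at hno
    obtain ⟨n1, n2, n3⟩ := hno
    have hfresh : ∀ j < w, Fresh n u v RO X j := by
      intro j hj
      rcases fresh_or_coll RO X j with hf | ⟨b, hb, a, hab, hf, he⟩
      · exact hf
      · exact absurd ⟨hf, he⟩ (n3 (a, b) (by
          simp only [T3, Finset.mem_filter, Finset.mem_product, Finset.mem_range]; omega))
    have hpos : 0 ≤ ((k : ℝ) + 1) * h := by positivity
    have hidx1 : 1 ≤ idx := by
      have : (0 : ℝ) < idx := by linarith
      exact_mod_cast this
    have := determ (w := w) hn A RO X h hh1 k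
      (fun k' hk' i t ht j hj hsk => n2 (k', i, t, j) (by
          simp only [T2, Finset.mem_product, Finset.mem_range, Finset.mem_univ, true_and]
          omega) ⟨hfresh j (by omega), hsk⟩)
      (fun k' hk' i hmn => n1 (k', i) (by
          simp only [T1, Finset.mem_product, Finset.mem_range, Finset.mem_univ, and_true]
          omega) hmn)
      k' hk' i t ht (idx - 1) (by omega) heq
    rw [Nat.cast_sub hidx1] at this
    have hk2 : (k' : ℝ) ≤ k := by exact_mod_cast hk'
    have h4 : ((k' : ℝ) + 1) * h ≤ (k + 1) * h := by gcongr
    push_cast at this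
    linarith
  rw [c1] at b1
  rw [c2] at b2
  set α : ℝ := (2 : ℝ) ^ (-δ)
  set β : ℝ := (2 : ℝ) ^ (-(u : ℝ)) with hβ
  have hβ0 : 0 ≤ β := by positivity
  have b3' : (T3.card : ℝ) * β ≤ w ^ 2 * β := by gcongr
  have hkk : 0 ≤ (k : ℝ) * (w ^ 2 * β) := by positivity
  refine hmono.trans (o1.trans ?_)
  have : (1 : ℝ) * (k + 1) * (m * α + w * m * q * β + w ^ 2 * β) =
    (k + 1) * m * α + (k + 1) * (m * (q * w)) * β + w ^ 2 * β + k * (w ^ 2 * β) := by ring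
  rw [this]
  linarith
end
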